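/- Define Z_{2A}(τ,z) = (2/3)·φ_{0,1}(τ,z) + 16·Λ₂(τ)·φ_{−2,1}(τ,z) for τ ∈ ℍ, z ∈ ℂ. Then Z_{2A} is a weak Jacobi form of weight 0 and index 1 for Γ₀(2) with trivial multiplier: (a) for every γ = (a b; c d) ∈ Γ₀(2), Z_{2A}( (aτ+b)/(cτ+d), z/(cτ+d) ) = e( c·z²/(cτ+d) )·Z_{2A}(τ,z); (b) for all integers λ, μ, Z_{2A}(τ, z + λτ + μ) = e( −λ²τ − 2λz )·Z_{2A}(τ,z); and (c) Z_{2A}(τ,0) = 8 = χ(g) for g in the class 2A of M₂₄. (This is the instance, for the class 2A with χ(g) = 8, T̃_g = 16Λ₂, N_g = n_g = 2 and h_g = 1, of the paper's Proposition that Z_g = (χ(g)/12)φ_{0,1} + T̃_g φ_{−2,1} is a weak Jacobi form of weight 0 and index 1 for Γ₀(N_g).) -/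

import Mathlib

/-!
The product defining `θ₃` equals the theta series `∑ p^{n²} yⁿ`, with `p = e^{πiτ}`, by the Jacobi
triple product identity (`triple_product`). That identity is the limit, by dominated convergence,
of its finite `q`-binomial form (`finite_triple_product`). So `θ₃` is Mathlib's `jacobiTheta₂`, and
`θ₁`, `θ₂`, `θ₄` are, up to exponential factors, its shifts by half periods.

The elliptic law of each `θᵢ²` comes from reindexing the theta series. For the modular law, the
functional equation of `jacobiTheta₂` and the one of Mathlib's `ModularForm.eta` describe `θᵢ²` and
`η⁶` under `τ ↦ -1/τ`, and the translation `τ ↦ τ + 1` is a termwise computation. Together they show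
that `φ_{0,1}` and `φ_{-2,1}` transform under `S` and `T` as Jacobi forms of index `1` and weights
`0` and `-2`. By the cocycle relations the elements of `SL₂(ℤ)` respecting such a law form a
subgroup, so the law holds for all of `SL₂(ℤ) = ⟨S, T⟩` (`JacobiInvariant.of_S_T`).

Finally `12 Λ₂(τ) = 2 E₂(2τ) - E₂(τ)`, and for `γ ∈ Γ₀(2)` the non-modular corrections in the
transformation laws of the two terms cancel, so `Λ₂` has weight `2` for `Γ₀(2)` (`Lam_two_smul`).
Hence `Λ₂ φ_{-2,1}` has weight `0`, like `φ_{0,1}`. At `z = 0` one has `θ₁ = 0` and, the theta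
constants `θ₂`, `θ₃`, `θ₄` being nonzero, `φ_{0,1}(τ, 0) = 12`, which gives the value `8`.
-/

/-- `q = e^{2πiτ}`. -/
noncomputable def qc (τ : ℂ) : ℂ := Complex.exp (2 * Real.pi * Complex.I * τ)

/-- The Dedekind eta function `η(τ) = e^{πiτ/12} ∏_{n ≥ 1} (1 - q^n)`. -/
noncomputable def eta (τ : ℂ) : ℂ :=
  Complex.exp (Real.pi * Complex.I * τ / 12) * ∏' n : ℕ, (1 - qc τ ^ (n + 1))

/-- `σ₁(k)`, the sum of the divisors of `k`. -/
def sigma1 (k : ℕ) : ℕ := ∑ d ∈ k.divisors, d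

/-- The weight-two Eisenstein-type form
`Λ_N(τ) = N(N-1)/24 + N ∑_{k ≥ 1} σ₁(k)(q^k - N q^{Nk})`. -/
noncomputable def Lam (N : ℕ) (τ : ℂ) : ℂ :=
  (N : ℂ) * ((N : ℂ) - 1) / 24 +
    (N : ℂ) * ∑' k : ℕ, (sigma1 (k + 1) : ℂ) *
      (qc τ ^ (k + 1) - (N : ℂ) * qc τ ^ (N * (k + 1)))

/-- `θ₁(τ,z) = -i q^{1/8} y^{1/2} ∏_{n≥1}(1-qⁿ)(1-yqⁿ)(1-y⁻¹q^{n-1})`. -/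
noncomputable def theta1 (τ z : ℂ) : ℂ :=
  -Complex.I * Complex.exp (Real.pi * Complex.I * τ / 4) *
    Complex.exp (Real.pi * Complex.I * z) *
    ∏' n : ℕ, ((1 - qc τ ^ (n + 1)) * (1 - qc z * qc τ ^ (n + 1)) *
      (1 - (qc z)⁻¹ * qc τ ^ n))

/-- `θ₂(τ,z) = q^{1/8} y^{1/2} ∏_{n≥1}(1-qⁿ)(1+yqⁿ)(1+y⁻¹q^{n-1})`. -/
noncomputable def theta2 (τ z : ℂ) : ℂ :=
  Complex.exp (Real.pi * Complex.I * τ / 4) * Complex.exp (Real.pi * Complex.I * z) *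
    ∏' n : ℕ, ((1 - qc τ ^ (n + 1)) * (1 + qc z * qc τ ^ (n + 1)) *
      (1 + (qc z)⁻¹ * qc τ ^ n))

/-- `θ₃(τ,z) = ∏_{n≥1}(1-qⁿ)(1+yq^{n-1/2})(1+y⁻¹q^{n-1/2})`. -/
noncomputable def theta3 (τ z : ℂ) : ℂ :=
  ∏' n : ℕ, ((1 - qc τ ^ (n + 1)) *
    (1 + qc z * Complex.exp (2 * Real.pi * Complex.I * ((n : ℂ) + 1 / 2) * τ)) *
    (1 + (qc z)⁻¹ * Complex.exp (2 * Real.pi * Complex.I * ((n : ℂ) + 1 / 2) * τ)))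

/-- `θ₄(τ,z) = ∏_{n≥1}(1-qⁿ)(1-yq^{n-1/2})(1-y⁻¹q^{n-1/2})`. -/
noncomputable def theta4 (τ z : ℂ) : ℂ :=
  ∏' n : ℕ, ((1 - qc τ ^ (n + 1)) *
    (1 - qc z * Complex.exp (2 * Real.pi * Complex.I * ((n : ℂ) + 1 / 2) * τ)) *
    (1 - (qc z)⁻¹ * Complex.exp (2 * Real.pi * Complex.I * ((n : ℂ) + 1 / 2) * τ)))

/-- The standard weak Jacobi form `φ_{0,1}(τ,z) = 4∑_{i=2,3,4}(θᵢ(τ,z)/θᵢ(τ,0))²` of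
weight 0 and index 1. -/
noncomputable def phi01 (τ z : ℂ) : ℂ :=
  4 * ((theta2 τ z / theta2 τ 0) ^ 2 + (theta3 τ z / theta3 τ 0) ^ 2 +
    (theta4 τ z / theta4 τ 0) ^ 2)

/-- The standard weak Jacobi form `φ_{-2,1}(τ,z) = -θ₁(τ,z)²/η(τ)⁶` of weight -2 and
index 1. -/
noncomputable def phim21 (τ z : ℂ) : ℂ := -(theta1 τ z ^ 2) / eta τ ^ 6

/-- The 2A twining genus `Z_{2A}(τ,z) = (2/3)φ_{0,1}(τ,z) + 16Λ₂(τ)φ_{-2,1}(τ,z)`. -/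
noncomputable def Z2A (τ z : ℂ) : ℂ :=
  (2 / 3 : ℂ) * phi01 τ z + 16 * Lam 2 τ * phim21 τ z

/-! ### The Jacobi triple product -/

/-- The finite `q`-Pochhammer product `(q; q)_n = ∏_{k=1}^n (1 - q^k)`. -/
noncomputable def qPoch (q : ℂ) (n : ℕ) : ℂ := ∏ k ∈ Finset.range n, (1 - q ^ (k + 1))

/-- The reciprocal `1 / (q; q)_m`, extended by `0` to negative integers `m`; with this convention
the recursion `qPochInv_sub_one` holds for every integer `m`. -/
noncomputable def qPochInv (q : ℂ) (m : ℤ) : ℂ := if m < 0 then 0 else (qPoch q m.toNat)⁻¹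

lemma one_sub_pow_ne_zero' {q : ℂ} (hq : ‖q‖ < 1) (k : ℕ) : 1 - q ^ (k + 1) ≠ 0 := by
  intro h
  have h1 : ‖q ^ (k + 1)‖ < 1 := by
    rw [norm_pow]; exact pow_lt_one₀ (norm_nonneg _) hq (by simp)
  rw [← sub_eq_zero.mp h] at h1
  simp at h1

lemma qPochInv_sub_one {q : ℂ} (hq : ‖q‖ < 1) (m : ℤ) :
    qPochInv q (m - 1) = (1 - q ^ m) * qPochInv q m := by
  rcases lt_trichotomy m 0 with h | rfl | h
  · simp [qPochInv, h, show m - 1 < 0 by omega]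
  · simp [qPochInv]
  · obtain ⟨k, rfl⟩ : ∃ k : ℕ, m = k + 1 := ⟨(m - 1).toNat, by omega⟩
    have e1 : ((k : ℤ) + 1).toNat = k + 1 := by omega
    have hz : q ^ ((k : ℤ) + 1) = q ^ (k + 1) := by exact_mod_cast zpow_natCast q (k + 1)
    have := one_sub_pow_ne_zero' hq k
    simp only [qPochInv, show ¬ ((k : ℤ) + 1 < 0) by omega, if_false, e1, add_sub_cancel_right,
      show ¬ ((k : ℤ) < 0) by omega, Int.toNat_natCast, hz, qPoch, Finset.prod_range_succ]
    rw [mul_inv, mul_left_comm, mul_inv_cancel₀ this, mul_one]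

/-- The finite form of the Jacobi triple product (a case of the `q`-binomial theorem), with
`q = p²`; the sum is finite because `qPochInv` vanishes at negative integers. -/
lemma finite_triple_product {p y : ℂ} (hp : ‖p‖ < 1) (hp0 : p ≠ 0) (hy : y ≠ 0) (n : ℕ) :
    HasSum (fun j : ℤ ↦ qPoch (p ^ 2) (2 * n) * qPochInv (p ^ 2) (n - j) *
        qPochInv (p ^ 2) (n + j) * (p ^ (j ^ 2) * y ^ j))
      (∏ k ∈ Finset.range n, ((1 + y * p ^ (2 * k + 1)) * (1 + y⁻¹ * p ^ (2 * k + 1)))) := by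
  have hq : ‖p ^ 2‖ < 1 := by
    rw [norm_pow]; exact pow_lt_one₀ (norm_nonneg _) hp (by simp)
  induction n with
  | zero =>
    convert hasSum_single (0 : ℤ) ?_ using 1
    · simp [qPoch, qPochInv]
    · intro j hj
      rcases lt_or_gt_of_ne hj with h | h
      · simp [qPochInv, h]
      · simp [qPochInv, h]
  | succ n ih =>
    rw [Finset.prod_range_succ]
    have h1 := ih.mul_left (1 + p ^ (4 * n + 2))
    have h2 := ((Equiv.subRight (1 : ℤ)).hasSum_iff.mpr ih).mul_left (y * p ^ (2 * n + 1))
    have h3 := ((Equiv.addRight (1 : ℤ)).hasSum_iff.mpr ih).mul_left (y⁻¹ * p ^ (2 * n + 1))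
    have key := (h1.add h2).add h3
    rw [← add_mul, ← add_mul] at key
    rw [mul_comm (Finset.prod _ _), show (1 + y * p ^ (2 * n + 1)) * (1 + y⁻¹ * p ^ (2 * n + 1)) =
      1 + p ^ (4 * n + 2) + y * p ^ (2 * n + 1) + y⁻¹ * p ^ (2 * n + 1) by field_simp; ring]
    convert! key using 1
    funext j
    simp only [Function.comp_apply, Equiv.subRight_apply, Equiv.coe_addRight]
    -- every term is expressed through `r (n + 1 - j)`, `r (n + 1 + j)`, `p ^ n` and `p ^ j`
    set r := qPochInv (p ^ 2) with hr
    have a1 : r (n - j) = (1 - (p ^ 2) ^ ((n : ℤ) + 1 - j)) * r (n + 1 - j) := by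
      rw [hr, ← qPochInv_sub_one hq]; congr 1; ring
    have a2 : r (n + j) = (1 - (p ^ 2) ^ ((n : ℤ) + 1 + j)) * r (n + 1 + j) := by
      rw [hr, ← qPochInv_sub_one hq]; congr 1; ring
    have a3 : r (n - (j - 1)) = r (n + 1 - j) := by congr 1; ring
    have a4 : r (n + (j - 1)) = (1 - (p ^ 2) ^ ((n : ℤ) + j)) * r (n + j) := by
      rw [hr, ← qPochInv_sub_one hq]; congr 1; ring
    have a5 : r (n + (j + 1)) = r (n + 1 + j) := by congr 1; ring
    have a6 : r (n - (j + 1)) = (1 - (p ^ 2) ^ ((n : ℤ) - j)) * r (n - j) := by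
      rw [hr, ← qPochInv_sub_one hq]; congr 1; ring
    have a7 : qPoch (p ^ 2) (2 * (n + 1)) =
        qPoch (p ^ 2) (2 * n) * (1 - (p ^ 2) ^ (2 * n + 1)) * (1 - (p ^ 2) ^ (2 * n + 2)) := by
      rw [show 2 * (n + 1) = 2 * n + 1 + 1 by ring, qPoch, Finset.prod_range_succ,
        Finset.prod_range_succ, qPoch]
    have b1 : p ^ ((j - 1) ^ 2) = p ^ (j ^ 2) * p / (p ^ j) ^ 2 := by
      rw [show (j - 1) ^ 2 = j ^ 2 + 1 - j * 2 by ring, zpow_sub₀ hp0, zpow_add₀ hp0, zpow_mul]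
      simp [zpow_ofNat]
    have b2 : p ^ ((j + 1) ^ 2) = p ^ (j ^ 2) * p * (p ^ j) ^ 2 := by
      rw [show (j + 1) ^ 2 = j ^ 2 + 1 + j * 2 by ring, zpow_add₀ hp0, zpow_add₀ hp0, zpow_mul]
      simp [zpow_ofNat]
    rw [a3, a4, a5, a6, a1, a2, a7, b1, b2, zpow_sub₀ hy, zpow_add₀ hy]
    push_cast
    have hp2 : p ^ 2 ≠ 0 := pow_ne_zero _ hp0
    have c : ∀ m : ℤ, (p ^ 2) ^ m = (p ^ m) ^ 2 := fun m ↦ by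
      rw [← zpow_natCast p 2, ← zpow_mul, mul_comm, zpow_mul, zpow_natCast]
    simp only [c, zpow_sub₀ hp0, zpow_add₀ hp0, zpow_one, zpow_natCast]
    have hu : p ^ j ≠ 0 := zpow_ne_zero _ hp0
    generalize p ^ (j ^ 2) = w
    generalize y ^ j = v
    generalize p ^ j = u at *
    generalize r (n + 1 - j) = r1
    generalize r (n + 1 + j) = r2
    generalize qPoch (p ^ 2) (2 * n) = K
    rw [show p ^ (4 * n + 2) = (p ^ n) ^ 4 * p ^ 2 by ring,
      show p ^ (2 * n + 1) = (p ^ n) ^ 2 * p by ring,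
      show (p ^ 2) ^ (2 * n + 1) = (p ^ n) ^ 4 * p ^ 2 by ring,
      show (p ^ 2) ^ (2 * n + 2) = (p ^ n) ^ 4 * p ^ 4 by ring]
    generalize p ^ n = N
    field_simp
    ring

lemma summable_norm_geom {p : ℂ} (hp : ‖p‖ < 1) (a : ℂ) (m : ℕ) :
    Summable fun k : ℕ ↦ ‖a * p ^ (2 * k + m)‖ := by
  have : Summable fun k : ℕ ↦ ‖a‖ * ‖p‖ ^ m * (‖p‖ ^ 2) ^ k :=
    (summable_geometric_of_lt_one (by positivity)
      (pow_lt_one₀ (norm_nonneg _) hp (by simp))).mul_left _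
  refine this.congr fun k ↦ ?_
  rw [norm_mul, norm_pow]; ring

lemma multipliable_odd {p : ℂ} (hp : ‖p‖ < 1) (a : ℂ) :
    Multipliable fun k : ℕ ↦ 1 + a * p ^ (2 * k + 1) :=
  multipliable_one_add_of_summable (summable_norm_geom hp a 1)

lemma tprod_qPoch_ne_zero {q : ℂ} (hq : ‖q‖ < 1) : ∏' k : ℕ, (1 - q ^ (k + 1)) ≠ 0 := by
  have h := tprod_one_add_ne_zero_of_summable (f := fun k : ℕ ↦ -q ^ (k + 1))
    (fun i ↦ by simpa [← sub_eq_add_neg] using one_sub_pow_ne_zero' hq i) ?_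
  · simpa [← sub_eq_add_neg] using h
  · simpa [pow_succ] using
      (summable_geometric_of_lt_one (norm_nonneg q) hq).mul_right ‖q‖

lemma tendsto_qPoch {q : ℂ} (hq : ‖q‖ < 1) :
    Filter.Tendsto (qPoch q) Filter.atTop (nhds (∏' k : ℕ, (1 - q ^ (k + 1)))) :=
  (ModularForm.multipliable_one_sub_pow hq).hasProd.tendsto_prod_nat

/-- The Jacobi triple product identity, obtained from `finite_triple_product` by dominated
convergence. -/
lemma triple_product {p y : ℂ} (hp : ‖p‖ < 1) (hp0 : p ≠ 0) (hy : y ≠ 0)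
    (hs : Summable fun j : ℤ ↦ p ^ (j ^ 2) * y ^ j) :
    ∏' k : ℕ, ((1 - (p ^ 2) ^ (k + 1)) * (1 + y * p ^ (2 * k + 1)) *
        (1 + y⁻¹ * p ^ (2 * k + 1))) = ∑' j : ℤ, p ^ (j ^ 2) * y ^ j := by
  have hq : ‖p ^ 2‖ < 1 := by
    rw [norm_pow]; exact pow_lt_one₀ (norm_nonneg _) hp (by simp)
  set Q := ∏' k : ℕ, (1 - (p ^ 2) ^ (k + 1)) with hQ
  have hQ0 : Q ≠ 0 := tprod_qPoch_ne_zero hq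
  have hQt : Filter.Tendsto (qPoch (p ^ 2)) Filter.atTop (nhds Q) := tendsto_qPoch hq
  have hm1 := multipliable_odd hp y
  have hm2 := multipliable_odd hp y⁻¹
  have hm := hm1.mul hm2
  have hinv := hQt.inv₀ hQ0
  obtain ⟨B, hB⟩ := (Metric.isBounded_range_of_tendsto _ hQt).exists_norm_le
  obtain ⟨C, hC⟩ := (Metric.isBounded_range_of_tendsto _ hinv).exists_norm_le
  have hB' : ∀ n, ‖qPoch (p ^ 2) n‖ ≤ B := fun n ↦ hB _ ⟨n, rfl⟩
  have hC0 : 0 ≤ C := (norm_nonneg _).trans (hC _ ⟨0, rfl⟩)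
  have hC' : ∀ m, ‖qPochInv (p ^ 2) m‖ ≤ C := fun m ↦ by
    unfold qPochInv
    split_ifs
    · simpa using hC0
    · exact hC _ ⟨m.toNat, rfl⟩
  have hr : Filter.Tendsto (qPochInv (p ^ 2)) Filter.atTop (nhds Q⁻¹) := by
    have : Filter.Tendsto Int.toNat Filter.atTop Filter.atTop :=
      Filter.tendsto_atTop.mpr fun b ↦
        (Filter.eventually_ge_atTop (b : ℤ)).mono fun m hm ↦ by omega
    refine (hinv.comp this).congr' ?_
    filter_upwards [Filter.eventually_ge_atTop (0 : ℤ)] with m hm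
    simp [qPochInv, not_lt.mpr hm]
  have hlim : Filter.Tendsto (fun n : ℕ ↦ ∑' j : ℤ, qPoch (p ^ 2) (2 * n) *
      qPochInv (p ^ 2) (n - j) * qPochInv (p ^ 2) (n + j) * (p ^ (j ^ 2) * y ^ j))
      Filter.atTop (nhds (∑' j : ℤ, Q * Q⁻¹ * Q⁻¹ * (p ^ (j ^ 2) * y ^ j))) := by
    refine tendsto_tsum_of_dominated_convergence
      (bound := fun j : ℤ ↦ B * C * C * ‖p ^ (j ^ 2) * y ^ j‖) (hs.norm.mul_left _) ?_ ?_
    · intro j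
      refine Filter.Tendsto.mul_const _ (Filter.Tendsto.mul (Filter.Tendsto.mul ?_ ?_) ?_)
      · exact hQt.comp (Filter.tendsto_id.const_mul_atTop' (by norm_num))
      · refine hr.comp (Filter.tendsto_atTop.mpr fun b ↦ ?_)
        filter_upwards [Filter.eventually_ge_atTop (b + j).toNat] with n hn
        omega
      · refine hr.comp (Filter.tendsto_atTop.mpr fun b ↦ ?_)
        filter_upwards [Filter.eventually_ge_atTop (b - j).toNat] with n hn
        omega
    · refine Filter.Eventually.of_forall fun n j ↦ ?_
      rw [norm_mul, norm_mul, norm_mul]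
      have hB0 : 0 ≤ B := (norm_nonneg _).trans (hB' 0)
      gcongr
      · exact hB' _
      · exact hC' _
      · exact hC' _
  have hprod := hm.hasProd.tendsto_prod_nat
  have heq := tendsto_nhds_unique hprod
    (hlim.congr fun n ↦ (finite_triple_product hp hp0 hy n).tsum_eq)
  simp_rw [mul_assoc]
  rw [(ModularForm.multipliable_one_sub_pow hq).tprod_mul hm, heq, tsum_mul_left, ← hQ]
  field_simp

/-! ### The theta functions as theta series -/

lemma qc_ne_zero (z : ℂ) : qc z ≠ 0 := Complex.exp_ne_zero _

lemma norm_exp_lt_one {τ : ℂ} (hτ : 0 < τ.im) : ‖Complex.exp (Real.pi * Complex.I * τ)‖ < 1 := by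
  rw [Complex.norm_exp, Real.exp_lt_one_iff]
  simp
  positivity

lemma qc_eq_sq (τ : ℂ) : qc τ = Complex.exp (Real.pi * Complex.I * τ) ^ 2 := by
  rw [qc, ← Complex.exp_nat_mul]; congr 1; push_cast; ring

lemma exp_half (n : ℕ) (τ : ℂ) : Complex.exp (2 * Real.pi * Complex.I * ((n : ℂ) + 1 / 2) * τ) =
    Complex.exp (Real.pi * Complex.I * τ) ^ (2 * n + 1) := by
  rw [← Complex.exp_nat_mul]; congr 1; push_cast; ring

lemma jacobiTheta₂_term_eq (n : ℤ) (z τ : ℂ) : jacobiTheta₂_term n z τ =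
    Complex.exp (Real.pi * Complex.I * τ) ^ (n ^ 2) * qc z ^ n := by
  rw [jacobiTheta₂_term, qc, ← Complex.exp_int_mul, ← Complex.exp_int_mul, ← Complex.exp_add]
  congr 1; push_cast; ring

/-- The product `θ₃` is Mathlib's theta series, by the triple product identity. -/
lemma theta3_eq {τ : ℂ} (hτ : 0 < τ.im) (z : ℂ) : theta3 τ z = jacobiTheta₂ z τ := by
  have hs := (summable_jacobiTheta₂_term_iff z τ).mpr hτ
  simp_rw [jacobiTheta₂_term_eq] at hs
  simp only [theta3, jacobiTheta₂, jacobiTheta₂_term_eq, exp_half, qc_eq_sq τ]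
  exact triple_product (norm_exp_lt_one hτ) (Complex.exp_ne_zero _) (qc_ne_zero z) hs

lemma qc_add (x y : ℂ) : qc (x + y) = qc x * qc y := by
  rw [qc, qc, qc, ← Complex.exp_add]; congr 1; ring

lemma qc_half : qc (1 / 2) = -1 := by
  rw [qc, ← Complex.exp_pi_mul_I]; congr 1; ring

lemma qc_div_two (τ : ℂ) : qc (τ / 2) = Complex.exp (Real.pi * Complex.I * τ) := by
  rw [qc]; congr 1; ring

/-- The shift `z ↦ z + 1/2` changes the sign of `y`. -/
lemma theta4_eq {τ : ℂ} (hτ : 0 < τ.im) (z : ℂ) : theta4 τ z = jacobiTheta₂ (z + 1 / 2) τ := by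
  rw [← theta3_eq hτ, theta3, theta4]
  refine tprod_congr fun n ↦ ?_
  rw [qc_add, qc_half]
  simp only [mul_neg, mul_one, inv_neg, neg_mul]
  ring

/-- The shift `z ↦ z + τ/2` multiplies `y` by `q^{1/2}`. -/
lemma theta2_eq {τ : ℂ} (hτ : 0 < τ.im) (z : ℂ) : theta2 τ z =
    Complex.exp (Real.pi * Complex.I * τ / 4) * Complex.exp (Real.pi * Complex.I * z) *
      jacobiTheta₂ (z + τ / 2) τ := by
  rw [← theta3_eq hτ, theta3, theta2]
  congr 1
  refine tprod_congr fun n ↦ ?_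
  rw [qc_add, qc_div_two, exp_half, qc_eq_sq τ]
  have h := Complex.exp_ne_zero (Real.pi * Complex.I * τ)
  have hz := qc_ne_zero z
  generalize Complex.exp (Real.pi * Complex.I * τ) = p at *
  congr 1
  · congr 1; ring
  · rw [mul_inv, pow_succ p (2 * n), pow_mul]; field_simp

lemma theta1_eq {τ : ℂ} (hτ : 0 < τ.im) (z : ℂ) : theta1 τ z =
    -Complex.I * Complex.exp (Real.pi * Complex.I * τ / 4) * Complex.exp (Real.pi * Complex.I * z) *
      jacobiTheta₂ (z + τ / 2 + 1 / 2) τ := by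
  rw [← theta3_eq hτ, theta3, theta1]
  congr 1
  refine tprod_congr fun n ↦ ?_
  rw [qc_add, qc_add, qc_div_two, exp_half, qc_eq_sq τ, qc_half]
  have h := Complex.exp_ne_zero (Real.pi * Complex.I * τ)
  have hz := qc_ne_zero z
  generalize Complex.exp (Real.pi * Complex.I * τ) = p at *
  congr 1
  · congr 1; ring
  · rw [mul_inv, mul_inv, pow_succ p (2 * n), pow_mul]; field_simp; ring

/-- Completing the square, i.e. reindexing the theta series by `n ↦ n + lam`. -/
lemma jacobiTheta₂_elliptic (lam mu : ℤ) (τ z : ℂ) : jacobiTheta₂ (z + lam * τ + mu) τ =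
    Complex.exp (-Real.pi * Complex.I * lam ^ 2 * τ - 2 * Real.pi * Complex.I * lam * z) *
      jacobiTheta₂ z τ := by
  rw [jacobiTheta₂, jacobiTheta₂, ← tsum_mul_left, ← (Equiv.addRight lam).tsum_eq (fun n ↦
    Complex.exp _ * jacobiTheta₂_term n z τ)]
  refine tsum_congr fun n ↦ ?_
  rw [Equiv.coe_addRight, jacobiTheta₂_term, jacobiTheta₂_term, ← Complex.exp_add,
    Complex.exp_eq_exp_iff_exists_int]
  refine ⟨n * mu, ?_⟩
  push_cast; ring

/-- The square of the functional equation of `jacobiTheta₂`, which removes the square root of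
`-iτ`. -/
lemma jacobiTheta₂_sq_S {τ : ℂ} (hτ : 0 < τ.im) (z : ℂ) : jacobiTheta₂ (z / τ) (-1 / τ) ^ 2 =
    -Complex.I * τ * Complex.exp (2 * Real.pi * Complex.I * (z ^ 2 / τ)) *
      jacobiTheta₂ z τ ^ 2 := by
  have hτ0 : τ ≠ 0 := by rintro rfl; simp at hτ
  have hx : -Complex.I * τ ≠ 0 := mul_ne_zero (neg_ne_zero.mpr Complex.I_ne_zero) hτ0
  have hc : ((-Complex.I * τ) ^ (1 / 2 : ℂ)) ^ 2 = -Complex.I * τ := by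
    rw [one_div]
    exact Complex.cpow_nat_inv_pow _ (by norm_num : (2 : ℕ) ≠ 0)
  have he : Complex.exp (-Real.pi * Complex.I * z ^ 2 / τ) ^ 2 *
      Complex.exp (2 * Real.pi * Complex.I * (z ^ 2 / τ)) = 1 := by
    rw [← Complex.exp_nat_mul, ← Complex.exp_add, ← Complex.exp_zero]
    congr 1; push_cast; ring
  rw [jacobiTheta₂_functional_equation z τ, mul_pow, mul_pow, div_pow, hc, one_pow]
  generalize jacobiTheta₂ (z / τ) (-1 / τ) = J
  generalize Complex.exp (-Real.pi * Complex.I * z ^ 2 / τ) = A at *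
  generalize Complex.exp (2 * Real.pi * Complex.I * (z ^ 2 / τ)) = B at *
  field_simp
  linear_combination (-J ^ 2) * he

/-- Termwise, because `n² ≡ n (mod 2)`. -/
lemma jacobiTheta₂_T (τ z : ℂ) : jacobiTheta₂ z (τ + 1) = jacobiTheta₂ (z + 1 / 2) τ := by
  refine tsum_congr fun n ↦ ?_
  rw [jacobiTheta₂_term, jacobiTheta₂_term, Complex.exp_eq_exp_iff_exists_int]
  obtain ⟨m, hm⟩ := Int.even_mul_pred_self n
  have hm' : (n : ℂ) * (n - 1) = m + m := by exact_mod_cast hm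
  refine ⟨m, ?_⟩
  linear_combination (Real.pi * Complex.I) * hm'

/-! ### Transformation laws of the theta and eta functions -/

lemma exp_neg_pi_I : Complex.exp (-(Real.pi * Complex.I)) = -1 := by
  rw [Complex.exp_neg, Complex.exp_pi_mul_I]; norm_num

lemma theta1_sq {τ : ℂ} (hτ : 0 < τ.im) (z : ℂ) : theta1 τ z ^ 2 =
    -Complex.exp (Real.pi * Complex.I * (τ / 2 + 2 * z)) *
      jacobiTheta₂ (z + τ / 2 + 1 / 2) τ ^ 2 := by
  rw [theta1_eq hτ, mul_pow, mul_pow, mul_pow, ← Complex.exp_nat_mul, ← Complex.exp_nat_mul, neg_sq,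
    Complex.I_sq, mul_assoc (-1 : ℂ), ← Complex.exp_add, neg_one_mul]
  congr 3; push_cast; ring

lemma theta2_sq {τ : ℂ} (hτ : 0 < τ.im) (z : ℂ) : theta2 τ z ^ 2 =
    Complex.exp (Real.pi * Complex.I * (τ / 2 + 2 * z)) * jacobiTheta₂ (z + τ / 2) τ ^ 2 := by
  rw [theta2_eq hτ, mul_pow, mul_pow, ← Complex.exp_nat_mul, ← Complex.exp_nat_mul,
    ← Complex.exp_add]
  congr 2; push_cast; ring

lemma jacobiTheta₂_sq_elliptic (lam mu : ℤ) (τ z : ℂ) : jacobiTheta₂ (z + lam * τ + mu) τ ^ 2 =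
    Complex.exp (2 * Real.pi * Complex.I * (-(lam : ℂ) ^ 2 * τ - 2 * lam * z)) *
      jacobiTheta₂ z τ ^ 2 := by
  rw [jacobiTheta₂_elliptic, mul_pow, ← Complex.exp_nat_mul]
  congr 2; push_cast; ring

lemma theta3_sq_elliptic (lam mu : ℤ) {τ : ℂ} (hτ : 0 < τ.im) (z : ℂ) :
    theta3 τ (z + lam * τ + mu) ^ 2 =
    Complex.exp (2 * Real.pi * Complex.I * (-(lam : ℂ) ^ 2 * τ - 2 * lam * z)) *
      theta3 τ z ^ 2 := by
  rw [theta3_eq hτ, theta3_eq hτ, jacobiTheta₂_sq_elliptic]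

lemma theta4_sq_elliptic (lam mu : ℤ) {τ : ℂ} (hτ : 0 < τ.im) (z : ℂ) :
    theta4 τ (z + lam * τ + mu) ^ 2 =
    Complex.exp (2 * Real.pi * Complex.I * (-(lam : ℂ) ^ 2 * τ - 2 * lam * z)) *
      theta4 τ z ^ 2 := by
  rw [theta4_eq hτ, theta4_eq hτ, show z + lam * τ + mu + 1 / 2 = z + 1 / 2 + lam * τ + mu by ring,
    jacobiTheta₂_sq_elliptic]
  congr 1
  rw [Complex.exp_eq_exp_iff_exists_int]
  exact ⟨-lam, by push_cast; ring⟩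

lemma theta2_sq_elliptic (lam mu : ℤ) {τ : ℂ} (hτ : 0 < τ.im) (z : ℂ) :
    theta2 τ (z + lam * τ + mu) ^ 2 =
    Complex.exp (2 * Real.pi * Complex.I * (-(lam : ℂ) ^ 2 * τ - 2 * lam * z)) *
      theta2 τ z ^ 2 := by
  rw [theta2_sq hτ, theta2_sq hτ, show z + lam * τ + mu + τ / 2 = z + τ / 2 + lam * τ + mu by ring,
    jacobiTheta₂_sq_elliptic, ← mul_assoc, ← mul_assoc, ← Complex.exp_add, ← Complex.exp_add]
  congr 1
  rw [Complex.exp_eq_exp_iff_exists_int]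
  exact ⟨mu, by ring⟩

lemma theta1_sq_elliptic (lam mu : ℤ) {τ : ℂ} (hτ : 0 < τ.im) (z : ℂ) :
    theta1 τ (z + lam * τ + mu) ^ 2 =
    Complex.exp (2 * Real.pi * Complex.I * (-(lam : ℂ) ^ 2 * τ - 2 * lam * z)) *
      theta1 τ z ^ 2 := by
  rw [theta1_sq hτ, theta1_sq hτ,
    show z + lam * τ + mu + τ / 2 + 1 / 2 = z + τ / 2 + 1 / 2 + lam * τ + mu by ring,
    jacobiTheta₂_sq_elliptic, show ∀ a b c : ℂ, -a * (b * c) = -(a * b) * c by intros; ring,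
    show ∀ a b c : ℂ, b * (-a * c) = -(b * a) * c by intros; ring,
    ← Complex.exp_add, ← Complex.exp_add]
  congr 2
  rw [Complex.exp_eq_exp_iff_exists_int]
  exact ⟨mu - lam, by push_cast; ring⟩

lemma phi01_elliptic (lam mu : ℤ) {τ : ℂ} (hτ : 0 < τ.im) (z : ℂ) : phi01 τ (z + lam * τ + mu) =
    Complex.exp (2 * Real.pi * Complex.I * (-(lam : ℂ) ^ 2 * τ - 2 * lam * z)) * phi01 τ z := by
  simp only [phi01, div_pow, theta2_sq_elliptic lam mu hτ, theta3_sq_elliptic lam mu hτ,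
    theta4_sq_elliptic lam mu hτ]
  ring

lemma phim21_elliptic (lam mu : ℤ) {τ : ℂ} (hτ : 0 < τ.im) (z : ℂ) : phim21 τ (z + lam * τ + mu) =
    Complex.exp (2 * Real.pi * Complex.I * (-(lam : ℂ) ^ 2 * τ - 2 * lam * z)) * phim21 τ z := by
  rw [phim21, phim21, theta1_sq_elliptic lam mu hτ]
  ring

lemma im_neg_one_div_pos {τ : ℂ} (hτ : 0 < τ.im) : 0 < (-1 / τ).im := by
  have h0 : τ ≠ 0 := by rintro rfl; simp at hτ
  rw [Complex.div_im]
  simp only [Complex.neg_im, Complex.one_im, Complex.neg_re, Complex.one_re, neg_zero, zero_mul,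
    zero_div, zero_sub, neg_mul, one_mul, neg_div, neg_neg]
  exact div_pos hτ (Complex.normSq_pos.mpr h0)

lemma theta3_sq_S {τ : ℂ} (hτ : 0 < τ.im) (z : ℂ) : theta3 (-1 / τ) (z / τ) ^ 2 =
    -Complex.I * τ * Complex.exp (2 * Real.pi * Complex.I * (z ^ 2 / τ)) * theta3 τ z ^ 2 := by
  rw [theta3_eq (im_neg_one_div_pos hτ), theta3_eq hτ, jacobiTheta₂_sq_S hτ]

/-- Under `τ ↦ -1/τ` the functions `θ₂²` and `θ₄²` are exchanged, with the same automorphy factor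
as `θ₃²`. -/
lemma theta4_sq_S {τ : ℂ} (hτ : 0 < τ.im) (z : ℂ) : theta4 (-1 / τ) (z / τ) ^ 2 =
    -Complex.I * τ * Complex.exp (2 * Real.pi * Complex.I * (z ^ 2 / τ)) * theta2 τ z ^ 2 := by
  have h0 : τ ≠ 0 := by rintro rfl; simp at hτ
  rw [theta4_eq (im_neg_one_div_pos hτ), theta2_sq hτ,
    show z / τ + 1 / 2 = (z + τ / 2) / τ by field_simp, jacobiTheta₂_sq_S hτ,
    mul_assoc _ (Complex.exp _), mul_assoc _ (Complex.exp _), ← mul_assoc (Complex.exp _),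
    ← Complex.exp_add]
  congr 3
  field_simp; ring_nf

lemma theta2_sq_S {τ : ℂ} (hτ : 0 < τ.im) (z : ℂ) : theta2 (-1 / τ) (z / τ) ^ 2 =
    -Complex.I * τ * Complex.exp (2 * Real.pi * Complex.I * (z ^ 2 / τ)) * theta4 τ z ^ 2 := by
  have h0 : τ ≠ 0 := by rintro rfl; simp at hτ
  rw [theta2_sq (im_neg_one_div_pos hτ), theta4_eq hτ,
    show z / τ + -1 / τ / 2 = (z - 1 / 2) / τ by field_simp; ring, jacobiTheta₂_sq_S hτ,
    show z + 1 / 2 = z - 1 / 2 + 1 by ring, jacobiTheta₂_add_left,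
    show ∀ a b c d : ℂ, a * (b * c * d) = b * (a * c) * d by intros; ring, ← Complex.exp_add]
  congr 3
  field_simp; ring_nf

/-- The factor here is the negative of the one for `θ₂²`, `θ₃²`, `θ₄²`, as `θ₁` is odd. -/
lemma theta1_sq_S {τ : ℂ} (hτ : 0 < τ.im) (z : ℂ) : theta1 (-1 / τ) (z / τ) ^ 2 =
    Complex.I * τ * Complex.exp (2 * Real.pi * Complex.I * (z ^ 2 / τ)) * theta1 τ z ^ 2 := by
  have h0 : τ ≠ 0 := by rintro rfl; simp at hτ
  rw [theta1_sq (im_neg_one_div_pos hτ), theta1_sq hτ,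
    show z / τ + -1 / τ / 2 + 1 / 2 = (z + τ / 2 - 1 / 2) / τ by field_simp; ring,
    jacobiTheta₂_sq_S hτ,
    show z + τ / 2 + 1 / 2 = z + τ / 2 - 1 / 2 + 1 by ring, jacobiTheta₂_add_left]
  have he : Complex.exp (Real.pi * Complex.I * (-1 / τ / 2 + 2 * (z / τ))) *
      Complex.exp (2 * Real.pi * Complex.I * ((z + τ / 2 - 1 / 2) ^ 2 / τ)) =
      Complex.exp (-(Real.pi * Complex.I)) * (Complex.exp (2 * Real.pi * Complex.I * (z ^ 2 / τ)) *
        Complex.exp (Real.pi * Complex.I * (τ / 2 + 2 * z))) := by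
    rw [← Complex.exp_add, ← Complex.exp_add, ← Complex.exp_add]
    congr 1
    field_simp; ring
  rw [exp_neg_pi_I] at he
  linear_combination (Complex.I * τ * jacobiTheta₂ (z + τ / 2 - 1 / 2) τ ^ 2) * he

lemma theta3_T {τ : ℂ} (hτ : 0 < τ.im) (z : ℂ) : theta3 (τ + 1) z = theta4 τ z := by
  rw [theta3_eq (by simpa using hτ), theta4_eq hτ, jacobiTheta₂_T]

lemma theta4_T {τ : ℂ} (hτ : 0 < τ.im) (z : ℂ) : theta4 (τ + 1) z = theta3 τ z := by
  rw [theta4_eq (by simpa using hτ), theta3_eq hτ, jacobiTheta₂_T,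
    show z + 1 / 2 + 1 / 2 = z + 1 by ring, jacobiTheta₂_add_left]

lemma theta2_sq_T {τ : ℂ} (hτ : 0 < τ.im) (z : ℂ) :
    theta2 (τ + 1) z ^ 2 = Complex.I * theta2 τ z ^ 2 := by
  rw [theta2_sq (by simpa using hτ), theta2_sq hτ, jacobiTheta₂_T,
    show z + (τ + 1) / 2 + 1 / 2 = z + τ / 2 + 1 by ring, jacobiTheta₂_add_left,
    show Real.pi * Complex.I * ((τ + 1) / 2 + 2 * z) =
      Real.pi / 2 * Complex.I + Real.pi * Complex.I * (τ / 2 + 2 * z) by ring,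
    Complex.exp_add, Complex.exp_pi_div_two_mul_I, mul_assoc]

lemma theta1_sq_T {τ : ℂ} (hτ : 0 < τ.im) (z : ℂ) :
    theta1 (τ + 1) z ^ 2 = Complex.I * theta1 τ z ^ 2 := by
  rw [theta1_sq (by simpa using hτ), theta1_sq hτ, jacobiTheta₂_T,
    show z + (τ + 1) / 2 + 1 / 2 + 1 / 2 = z + τ / 2 + 1 / 2 + 1 by ring, jacobiTheta₂_add_left,
    show Real.pi * Complex.I * ((τ + 1) / 2 + 2 * z) =
      Real.pi / 2 * Complex.I + Real.pi * Complex.I * (τ / 2 + 2 * z) by ring,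
    Complex.exp_add, Complex.exp_pi_div_two_mul_I]
  ring

lemma eta_eq (τ : ℂ) : eta τ = ModularForm.eta τ := by
  rw [eta, ModularForm.eta]
  congr 1
  · rw [Function.Periodic.qParam]; congr 1; push_cast; ring
  · simp only [ModularForm.eta_q_eq_pow, qc]

lemma eta_pow_six_S {τ : ℂ} (hτ : 0 < τ.im) :
    eta (-1 / τ) ^ 6 = Complex.I * τ ^ 3 * eta τ ^ 6 := by
  have h := ModularForm.eta_comp_eq_csqrt_I_inv (show τ ∈ UpperHalfPlane.upperHalfPlaneSet from hτ)
  simp only [Function.comp_apply, Pi.smul_apply, Pi.mul_apply, smul_eq_mul] at h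
  have hs : ∀ x : ℂ, Complex.sqrt x ^ 6 = x ^ 3 := fun x ↦ by
    rw [show 6 = 2 * 3 by norm_num, pow_mul]
    congr 1
    rw [Complex.sqrt]
    exact Complex.cpow_nat_inv_pow _ (by norm_num : (2 : ℕ) ≠ 0)
  rw [eta_eq, eta_eq, h, mul_pow, mul_pow, inv_pow, hs, hs, Complex.I_pow_three, inv_neg,
    Complex.inv_I]
  ring

lemma eta_pow_six_T (τ : ℂ) : eta (τ + 1) ^ 6 = Complex.I * eta τ ^ 6 := by
  have hq : qc (τ + 1) = qc τ := by
    rw [qc_add, show qc 1 = 1 by simp [qc], mul_one]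
  have he : Complex.exp (Real.pi * Complex.I * (τ + 1) / 12) ^ 6 =
      Complex.I * Complex.exp (Real.pi * Complex.I * τ / 12) ^ 6 := by
    rw [← Complex.exp_nat_mul, ← Complex.exp_nat_mul,
      show ((6 : ℕ) : ℂ) * (Real.pi * Complex.I * (τ + 1) / 12) =
        Real.pi / 2 * Complex.I + (6 : ℕ) * (Real.pi * Complex.I * τ / 12) by push_cast; ring,
      Complex.exp_add, Complex.exp_pi_div_two_mul_I]
  rw [eta, eta, hq, mul_pow, mul_pow, he, mul_assoc]

/-! ### The weak Jacobi forms of index one -/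

lemma theta3_zero_ne_zero {τ : ℂ} (hτ : 0 < τ.im) : theta3 τ 0 ≠ 0 := by
  have hp := norm_exp_lt_one hτ
  have hq : ‖qc τ‖ < 1 := by
    rw [qc_eq_sq, norm_pow]; exact pow_lt_one₀ (norm_nonneg _) hp (by simp)
  have hq0 : qc 0 = 1 := by simp [qc]
  set p := Complex.exp (Real.pi * Complex.I * τ)
  have hm := multipliable_odd hp 1
  have h : ∏' k : ℕ, (1 + 1 * p ^ (2 * k + 1)) ≠ 0 := by
    refine tprod_one_add_ne_zero_of_summable (fun k hk ↦ ?_) (summable_norm_geom hp 1 1)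
    have h1 : ‖p ^ (2 * k + 1)‖ < 1 := by
      rw [norm_pow]; exact pow_lt_one₀ (norm_nonneg _) hp (by simp)
    rw [one_mul, ← eq_neg_iff_add_eq_zero] at hk
    rw [← norm_neg, ← hk] at h1
    simp at h1
  have e : theta3 τ 0 = ∏' k : ℕ, ((1 - qc τ ^ (k + 1)) *
      ((1 + 1 * p ^ (2 * k + 1)) * (1 + 1 * p ^ (2 * k + 1)))) := by
    rw [theta3]
    refine tprod_congr fun n ↦ ?_
    rw [hq0, inv_one, exp_half, mul_assoc]
  rw [e, (ModularForm.multipliable_one_sub_pow hq).tprod_mul (hm.mul hm), hm.tprod_mul hm]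
  exact mul_ne_zero (tprod_qPoch_ne_zero hq) (mul_ne_zero h h)

lemma theta4_zero_ne_zero {τ : ℂ} (hτ : 0 < τ.im) : theta4 τ 0 ≠ 0 := by
  rw [← theta3_T hτ]
  exact theta3_zero_ne_zero (by simpa using hτ)

/-- Reduced by `τ ↦ -1/τ` to the nonvanishing of `θ₄(-1/τ, 0)`. -/
lemma theta2_zero_ne_zero {τ : ℂ} (hτ : 0 < τ.im) : theta2 τ 0 ≠ 0 := by
  intro h
  have := theta4_sq_S hτ 0
  rw [zero_div, h, zero_pow two_ne_zero, mul_zero] at this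
  exact theta4_zero_ne_zero (im_neg_one_div_pos hτ) (pow_eq_zero_iff two_ne_zero |>.mp this)

lemma theta1_zero (τ : ℂ) : theta1 τ 0 = 0 := by
  rw [theta1, tprod_of_exists_eq_zero ⟨0, by simp [qc]⟩, mul_zero]

lemma phi01_zero {τ : ℂ} (hτ : 0 < τ.im) : phi01 τ 0 = 12 := by
  rw [phi01, div_self (theta2_zero_ne_zero hτ), div_self (theta3_zero_ne_zero hτ),
    div_self (theta4_zero_ne_zero hτ)]
  norm_num

lemma phim21_zero (τ : ℂ) : phim21 τ 0 = 0 := by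
  simp [phim21, theta1_zero]

lemma phi01_S {τ : ℂ} (hτ : 0 < τ.im) (z : ℂ) : phi01 (-1 / τ) (z / τ) =
    Complex.exp (2 * Real.pi * Complex.I * (z ^ 2 / τ)) * phi01 τ z := by
  have h0 : τ ≠ 0 := by rintro rfl; simp at hτ
  have e2 := theta2_sq_S hτ 0
  have e3 := theta3_sq_S hτ 0
  have e4 := theta4_sq_S hτ 0
  simp only [zero_div, ne_eq, OfNat.ofNat_ne_zero, not_false_eq_true, zero_pow, mul_zero,
    Complex.exp_zero, mul_one] at e2 e3 e4
  have n2 := theta2_zero_ne_zero hτ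
  have n3 := theta3_zero_ne_zero hτ
  have n4 := theta4_zero_ne_zero hτ
  have hI := Complex.I_ne_zero
  simp only [phi01, div_pow, theta2_sq_S hτ, theta3_sq_S hτ, theta4_sq_S hτ, e2, e3, e4]
  field_simp
  ring

lemma phi01_T {τ : ℂ} (hτ : 0 < τ.im) (z : ℂ) : phi01 (τ + 1) z = phi01 τ z := by
  simp only [phi01, div_pow, theta2_sq_T hτ, theta3_T hτ, theta4_T hτ,
    mul_div_mul_left _ _ Complex.I_ne_zero]
  ring

lemma phim21_S {τ : ℂ} (hτ : 0 < τ.im) (z : ℂ) : phim21 (-1 / τ) (z / τ) =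
    τ ^ (-2 : ℤ) * Complex.exp (2 * Real.pi * Complex.I * (z ^ 2 / τ)) * phim21 τ z := by
  have h0 : τ ≠ 0 := by rintro rfl; simp at hτ
  have hI := Complex.I_ne_zero
  rw [phim21, phim21, theta1_sq_S hτ, eta_pow_six_S hτ, zpow_neg, zpow_ofNat,
    show Complex.I * τ ^ 3 * eta τ ^ 6 = (Complex.I * τ) * (τ ^ 2 * eta τ ^ 6) by ring,
    mul_assoc (Complex.I * τ), ← mul_neg, mul_div_mul_left _ _ (mul_ne_zero hI h0), div_eq_mul_inv,
    mul_inv]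
  ring

lemma phim21_T {τ : ℂ} (hτ : 0 < τ.im) (z : ℂ) : phim21 (τ + 1) z = phim21 τ z := by
  rw [phim21, phim21, theta1_sq_T hτ, eta_pow_six_T, ← mul_neg,
    mul_div_mul_left _ _ Complex.I_ne_zero]

open UpperHalfPlane MatrixGroups in
/-- Invariance of `φ` under a single `γ ∈ SL₂(ℤ)`, as for a Jacobi form of weight `k` and
index `1`. -/
def JacobiInvariant (k : ℤ) (φ : ℂ → ℂ → ℂ) (γ : SL(2, ℤ)) : Prop :=
  ∀ (τ : ℍ) (z : ℂ), φ ((γ • τ : ℍ) : ℂ) (z / denom γ τ) =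
    denom γ τ ^ k * Complex.exp (2 * Real.pi * Complex.I * (γ 1 0 * z ^ 2 / denom γ τ)) * φ τ z

section Cocycle

open UpperHalfPlane MatrixGroups

/-- The cocycle relation for the factor `cτ + d`. -/
lemma denom_mul_SL (A B : SL(2, ℤ)) (τ : ℍ) :
    denom (A * B : SL(2, ℤ)) τ = denom A ((B • τ : ℍ) : ℂ) * denom B τ := by
  have h := ModularGroup.denom_apply B τ ▸ denom_ne_zero B τ
  rw [ModularGroup.denom_apply, ModularGroup.denom_apply, ModularGroup.denom_apply,
    coe_specialLinearGroup_apply]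
  simp only [Matrix.SpecialLinearGroup.coe_mul, Matrix.mul_apply, Fin.sum_univ_two,
    algebraMap_int_eq, Int.coe_castRingHom, Complex.ofReal_intCast]
  push_cast
  field_simp
  ring

lemma JacobiInvariant.mul {k : ℤ} {φ : ℂ → ℂ → ℂ} {A B : SL(2, ℤ)} (hA : JacobiInvariant k φ A)
    (hB : JacobiInvariant k φ B) : JacobiInvariant k φ (A * B) := by
  intro τ z
  have nA := denom_ne_zero A (B • τ)
  have nB := denom_ne_zero B τ
  have hj := denom_mul_SL A B τ
  -- the exponents `c z² / (cτ + d)` add up along the product, because `det B = 1`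
  have hc : (A 1 0 : ℂ) + B 1 0 * (denom A ((B • τ : ℍ) : ℂ) * denom B τ) =
      ((A * B) 1 0 : ℤ) * denom B τ := by
    have hdet := B.det_coe
    rw [Matrix.det_fin_two] at hdet
    have hdet' : (B 0 0 : ℂ) * B 1 1 - B 0 1 * B 1 0 = 1 := by exact_mod_cast hdet
    rw [← hj, ModularGroup.denom_apply, ModularGroup.denom_apply,
      Matrix.SpecialLinearGroup.coe_mul, Matrix.mul_apply, Matrix.mul_apply, Fin.sum_univ_two, Fin.sum_univ_two]
    push_cast
    linear_combination (-A 1 0 : ℂ) * hdet'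
  rw [hj, mul_smul, mul_comm (denom A _), ← div_div, hA, hB]
  generalize denom A ((B • τ : ℍ) : ℂ) = jA at *
  generalize denom B τ = jB at *
  rw [show ∀ a b c d e : ℂ, a * b * (c * d * e) = c * a * (b * d) * e by intros; ring, mul_zpow,
    ← Complex.exp_add]
  congr 3
  field_simp
  linear_combination z ^ 2 * hc

lemma JacobiInvariant.inv {k : ℤ} {φ : ℂ → ℂ → ℂ} {A : SL(2, ℤ)} (hA : JacobiInvariant k φ A) :
    JacobiInvariant k φ A⁻¹ := by
  intro τ z
  have nB := denom_ne_zero (A⁻¹ : SL(2, ℤ)) τ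
  have hj := denom_mul_SL A A⁻¹ τ
  rw [mul_inv_cancel] at hj
  have h1 : denom (1 : SL(2, ℤ)) τ = 1 := by simp
  rw [h1] at hj
  have h := hA (A⁻¹ • τ) (z / denom (A⁻¹ : SL(2, ℤ)) τ)
  rw [eq_inv_of_mul_eq_one_left hj.symm, smul_inv_smul, div_inv_eq_mul, div_mul_cancel₀ _ nB] at h
  rw [h]
  have hc : (A⁻¹ : SL(2, ℤ)) 1 0 = - A 1 0 := by
    rw [Matrix.SpecialLinearGroup.coe_inv, Matrix.adjugate_fin_two]; simp
  rw [hc]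
  generalize denom (A⁻¹ : SL(2, ℤ)) τ = j at *
  have he : Complex.exp (2 * Real.pi * Complex.I * ((-A 1 0 : ℤ) * z ^ 2 / j)) *
      Complex.exp (2 * Real.pi * Complex.I * (A 1 0 * (z / j) ^ 2 / j⁻¹)) = 1 := by
    rw [← Complex.exp_add, ← Complex.exp_zero]
    congr 1
    push_cast
    field_simp; ring
  have hk : j ^ k * j⁻¹ ^ k = 1 := by rw [← mul_zpow, mul_inv_cancel₀ nB, one_zpow]
  rw [show ∀ a b c d e : ℂ, a * b * (c * d * e) = (a * c) * (b * d) * e by intros; ring, hk, he]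
  ring

/-- Since `S` and `T` generate `SL₂(ℤ)`, invariance under these two suffices. -/
lemma JacobiInvariant.of_S_T {k : ℤ} {φ : ℂ → ℂ → ℂ}
    (hS : ∀ τ : ℂ, 0 < τ.im → ∀ z, φ (-1 / τ) (z / τ) =
      τ ^ k * Complex.exp (2 * Real.pi * Complex.I * (z ^ 2 / τ)) * φ τ z)
    (hT : ∀ τ : ℂ, 0 < τ.im → ∀ z, φ (τ + 1) z = φ τ z) (γ : SL(2, ℤ)) :
    JacobiInvariant k φ γ := by
  have hγ : γ ∈ Subgroup.closure {ModularGroup.S, ModularGroup.T} := by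
    simp [SpecialLinearGroup.SL2Z_generators]
  induction hγ using Subgroup.closure_induction with
  | mem x hx =>
    rcases hx with rfl | rfl
    · intro τ z
      have hd : denom ModularGroup.S τ = τ := by
        rw [ModularGroup.denom_apply]; simp [ModularGroup.S]
      have hc : ((ModularGroup.S • τ : ℍ) : ℂ) = -1 / τ := by
        rw [coe_specialLinearGroup_apply]; simp [ModularGroup.S]
      rw [hd, hc, hS τ τ.im_pos]
      simp [ModularGroup.S]
    · intro τ z
      have hd : denom ModularGroup.T τ = 1 := by
        rw [ModularGroup.denom_apply]; simp [ModularGroup.T]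
      have hc : ((ModularGroup.T • τ : ℍ) : ℂ) = τ + 1 := by
        rw [coe_specialLinearGroup_apply]; simp [ModularGroup.T]
      rw [hd, hc, div_one, hT τ τ.im_pos]
      simp [ModularGroup.T]
  | one => intro τ z; simp
  | mul x y _ _ hx hy => exact hx.mul hy
  | inv x _ hx => exact hx.inv

end Cocycle

open MatrixGroups in
lemma phi01_invariant (γ : SL(2, ℤ)) : JacobiInvariant 0 phi01 γ :=
  .of_S_T (fun τ hτ z ↦ by rw [phi01_S hτ, zpow_zero, one_mul]) (fun _ hτ z ↦ phi01_T hτ z) γ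

open MatrixGroups in
lemma phim21_invariant (γ : SL(2, ℤ)) : JacobiInvariant (-2) phim21 γ :=
  .of_S_T (fun _ hτ z ↦ phim21_S hτ z) (fun _ hτ z ↦ phim21_T hτ z) γ

/-! ### The weight two form for `Γ₀(2)` -/

section Lambda

open UpperHalfPlane MatrixGroups EisensteinSeries ModularForm

/-- `Λ₂(τ) = (2 E₂(2τ) - E₂(τ)) / 12`. -/
lemma Lam_two_eq (τ τ' : ℍ) (h : (τ' : ℂ) = 2 * τ) : Lam 2 τ = (2 * E2 τ' - E2 τ) / 12 := by
  have hE : ∀ σ : ℍ, Summable (fun n : ℕ ↦ (sigma1 (n + 1) : ℂ) * qc σ ^ (n + 1)) ∧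
      E2 σ = 1 - 24 * ∑' n : ℕ, (sigma1 (n + 1) : ℂ) * qc σ ^ (n + 1) := fun σ ↦ by
    have e : ∀ n, (sigma1 n : ℂ) = ArithmeticFunction.sigma 1 n := fun n ↦ by
      simp [sigma1, ArithmeticFunction.sigma_one_apply]
    simp only [e, qc]
    refine ⟨(summable_nat_add_iff 1).mpr (summable_sigma_mul_cexp_pow (k := 2) one_le_two σ), ?_⟩
    rw [E2_eq_tsum_cexp, tsum_pnat_eq_tsum_succ
      (f := fun n ↦ ArithmeticFunction.sigma 1 n * Complex.exp (2 * Real.pi * Complex.I * σ) ^ n)]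
  have hq : ∀ n : ℕ, qc τ ^ (2 * (n + 1)) = qc τ' ^ (n + 1) := fun n ↦ by
    rw [h, two_mul (τ : ℂ), qc_add, ← sq, pow_mul]
  rw [Lam, (hE τ).2, (hE τ').2]
  simp_rw [hq, mul_sub, mul_left_comm _ ((2 : ℕ) : ℂ)]
  rw [(hE τ).1.tsum_sub ((hE τ').1.mul_left _), tsum_mul_left]
  push_cast
  ring

/-- The quasi-modular transformation law of `E₂`. -/
lemma E2_smul (γ : SL(2, ℤ)) (τ : ℍ) : E2 (γ • τ) = denom γ τ ^ 2 * E2 τ -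
    6 * Complex.I * γ 1 0 * denom γ τ / Real.pi := by
  have h := congrFun (E2_slash_action γ) τ
  have hd := denom_ne_zero γ τ
  rw [SL_slash_apply, zpow_neg, ← div_eq_mul_inv, div_eq_iff (zpow_ne_zero _ hd)] at h
  rw [h]
  simp only [Pi.sub_apply, Pi.smul_apply, smul_eq_mul, D2, riemannZeta_two, zpow_ofNat]
  have : (Real.pi : ℂ) ≠ 0 := by exact_mod_cast Real.pi_ne_zero
  field_simp

/-- `Λ₂` has weight `2` for `Γ₀(2)`: `2 (γ • τ) = γ' • (2τ)` with `γ' = (a, 2b; c/2, d)`, and the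
quasi-modular corrections of the two Eisenstein series cancel. -/
lemma Lam_two_smul (γ : SL(2, ℤ)) (hγ : (2 : ℤ) ∣ γ 1 0) (τ : ℍ) :
    Lam 2 (γ • τ : ℍ) = denom γ τ ^ 2 * Lam 2 τ := by
  obtain ⟨e, he⟩ := hγ
  have hdet := γ.det_coe
  rw [Matrix.det_fin_two] at hdet
  let γ' : SL(2, ℤ) := ⟨!![γ 0 0, 2 * γ 0 1; e, γ 1 1], by
    rw [Matrix.det_fin_two_of, mul_assoc, mul_left_comm, ← he]; exact hdet⟩
  let τ' : ℍ := ⟨2 * τ, by simpa using τ.im_pos⟩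
  have hτ' : (τ' : ℂ) = 2 * τ := rfl
  have hd : denom γ' τ' = denom γ τ := by
    rw [ModularGroup.denom_apply, ModularGroup.denom_apply, hτ', he]
    simp [γ']; ring
  have hs : ((γ' • τ' : ℍ) : ℂ) = 2 * (γ • τ : ℍ) := by
    have h : (2 * e * τ + γ 1 1 : ℂ) ≠ 0 := by
      have := denom_ne_zero γ τ
      rw [ModularGroup.denom_apply, he] at this
      simpa using this
    have h' : (e * (2 * τ) + γ 1 1 : ℂ) ≠ 0 := by convert h using 2; ring
    rw [coe_specialLinearGroup_apply, coe_specialLinearGroup_apply]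
    simp [γ', he, hτ']
    field_simp
  rw [Lam_two_eq _ _ hs, Lam_two_eq τ τ' hτ', E2_smul, E2_smul, hd, he]
  have : γ' 1 0 = e := rfl
  rw [this]
  push_cast
  ring

end Lambda

/-! ### The twining genus of class 2A -/

/-- `Z_{2A}` is a weak Jacobi form of weight 0 and index 1 for `Γ₀(2)` with
trivial multiplier: (a) modular transformation under `Γ₀(2)` with index-1 automorphy
factor, (b) elliptic transformation, (c) `Z_{2A}(τ,0) = 8 = χ(2A)`. -/
theorem stmt_18 :
    (∀ a b c d : ℤ, a * d - b * c = 1 → (2 : ℤ) ∣ c → ∀ τ z : ℂ, 0 < τ.im →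
      Z2A ((a * τ + b) / (c * τ + d)) (z / (c * τ + d)) =
        Complex.exp (2 * Real.pi * Complex.I * (c * z ^ 2 / (c * τ + d))) * Z2A τ z) ∧
    (∀ (lam mu : ℤ) (τ z : ℂ), 0 < τ.im →
      Z2A τ (z + lam * τ + mu) =
        Complex.exp (2 * Real.pi * Complex.I * (-(lam : ℂ) ^ 2 * τ - 2 * lam * z)) *
          Z2A τ z) ∧
    (∀ τ : ℂ, 0 < τ.im → Z2A τ 0 = 8) := by
  refine ⟨fun a b c d hdet hc τ z hτ ↦ ?_, fun lam mu τ z hτ ↦ ?_, fun τ hτ ↦ ?_⟩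
  · let γ : Matrix.SpecialLinearGroup (Fin 2) ℤ := ⟨!![a, b; c, d], by
      rw [Matrix.det_fin_two_of]; exact hdet⟩
    let t : UpperHalfPlane := ⟨τ, hτ⟩
    have hd : UpperHalfPlane.denom γ t = c * τ + d := by
      rw [ModularGroup.denom_apply]; rfl
    have hs : ((γ • t : UpperHalfPlane) : ℂ) = (a * τ + b) / (c * τ + d) := by
      rw [UpperHalfPlane.coe_specialLinearGroup_apply]; simp [γ, t]
    have hne : (c * τ + d : ℂ) ≠ 0 := hd ▸ UpperHalfPlane.denom_ne_zero γ t
    have h0 := phi01_invariant γ t z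
    have h2 := phim21_invariant γ t z
    have hL := Lam_two_smul γ hc t
    rw [hd, hs] at h0 h2 hL
    change _ = _ * Complex.exp (2 * Real.pi * Complex.I * (c * z ^ 2 / _)) * phi01 τ z at h0
    change _ = _ * Complex.exp (2 * Real.pi * Complex.I * (c * z ^ 2 / _)) * phim21 τ z at h2
    change _ = _ * Lam 2 τ at hL
    rw [Z2A, Z2A, h0, h2, hL, zpow_zero, zpow_neg, zpow_ofNat]
    field_simp
  · rw [Z2A, Z2A, phi01_elliptic lam mu hτ, phim21_elliptic lam mu hτ]
    ring
  · rw [Z2A, phi01_zero hτ, phim21_zero]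
    norm_num
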